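/- Let f, g : I → ℝ be strictly monotone and differentiable with f'(x) ≠ 0 and g'(x) ≠ 0 for all x ∈ I, and suppose f and g have the same monotonicity (both strictly increasing or both strictly decreasing). Then A^[f] ≤ A^[g] if and only if the function x ↦ f'(x)/g'(x) is non-increasing on I. -/

import Mathlib

/-!
For increasing generators, `A^[f](a) ≤ A^[g](a)` says that the average of the values `f (aᵢ)` is at
most `f ∘ g⁻¹` at the average of the values `g (aᵢ)`. This is Jensen's inequality with equal weights
for `f ∘ g⁻¹`, so it holds for all `a` when `f ∘ g⁻¹` is concave; conversely, its two-variable case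
is midpoint concavity, which together with continuity gives concavity. The derivative of `f ∘ g⁻¹`
at `g x` is `f' x / g' x`, and `g` is increasing, so `f ∘ g⁻¹` is concave exactly when `f' / g'` is
non-increasing. Decreasing generators reduce to increasing ones, since `f` and `-f` generate the
same mean.
-/

open Set Function Filter

/-- The quasi-arithmetic mean generated by `f` on the interval `I`,
applied to a vector `a ∈ Iⁿ`: `f⁻¹((f a₁ + ⋯ + f aₙ)/n)`, where the
inverse of `f` is taken on `I`. -/
noncomputable def qam (I : Set ℝ) (f : ℝ → ℝ) {n : ℕ} (a : Fin n → ℝ) : ℝ :=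
  Function.invFunOn f I ((∑ i, f (a i)) / n)

/-- The natural (pointwise) partial order on quasi-arithmetic means:
`A^[f] ≤ A^[g]` iff `A^[f](a) ≤ A^[g](a)` for every `n ≥ 1` and every `a ∈ Iⁿ`. -/
def qamLE (I : Set ℝ) (f g : ℝ → ℝ) : Prop :=
  ∀ n : ℕ, 1 ≤ n → ∀ a : Fin n → ℝ, (∀ i, a i ∈ I) → qam I f a ≤ qam I g a

/-- `A^[f] = A^[g]` : equality of the two quasi-arithmetic means as means. -/
def qamEQ (I : Set ℝ) (f g : ℝ → ℝ) : Prop :=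
  ∀ n : ℕ, 1 ≤ n → ∀ a : Fin n → ℝ, (∀ i, a i ∈ I) → qam I f a = qam I g a

/-- `f` is strictly monotone on `I` (strictly increasing or strictly decreasing). -/
def StrictMonoOrAntiOn (f : ℝ → ℝ) (I : Set ℝ) : Prop :=
  StrictMonoOn f I ∨ StrictAntiOn f I

theorem nonneg_of_continuousOn_of_midpoint_le {φ : ℝ → ℝ} {a b : ℝ} (hφ : ContinuousOn φ (Icc a b))
    (hmid : ∀ t ∈ Icc a b, ∀ u ∈ Icc a b, (φ t + φ u) / 2 ≤ φ (midpoint ℝ t u))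
    (ha : 0 ≤ φ a) (hb : 0 ≤ φ b) : ∀ t ∈ Icc a b, 0 ≤ φ t := by
  intro t ht
  have midpoint_reflect (c r : ℝ) : midpoint ℝ c (2 * r - c) = r := by
    rw [midpoint_eq_smul_add, smul_eq_mul, invOf_eq_inv]; ring
  obtain ⟨r, hr, hmin⟩ := isCompact_Icc.exists_isMinOn ⟨t, ht⟩ hφ
  refine le_trans ?_ (hmin ht)
  -- Reflect the endpoint nearer to the minimizer `r` through `r`.
  rcases le_total (r - a) (b - r) with hnear | hnear
  · have hmem : 2 * r - a ∈ Icc a b := ⟨by linarith [hr.1], by linarith⟩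
    have hle := hmid a ⟨le_rfl, hr.1.trans hr.2⟩ _ hmem
    rw [midpoint_reflect] at hle
    linarith [isMinOn_iff.1 hmin _ hmem]
  · have hmem : 2 * r - b ∈ Icc a b := ⟨by linarith, by linarith [hr.2]⟩
    have hle := hmid b ⟨hr.1.trans hr.2, le_rfl⟩ _ hmem
    rw [midpoint_reflect] at hle
    linarith [isMinOn_iff.1 hmin _ hmem]

theorem concaveOn_of_continuousOn_of_midpoint_le {E : Type*} [AddCommGroup E] [Module ℝ E]
    [TopologicalSpace E] [IsTopologicalAddGroup E] [ContinuousSMul ℝ E] {s : Set E} {f : E → ℝ}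
    (hs : Convex ℝ s) (hf : ContinuousOn f s)
    (hmid : ∀ x ∈ s, ∀ y ∈ s, (f x + f y) / 2 ≤ f (midpoint ℝ x y)) : ConcaveOn ℝ s f := by
  refine ⟨hs, fun x hx y hy a b ha hb hab => ?_⟩
  have hmaps : MapsTo (AffineMap.lineMap x y) (Icc (0 : ℝ) 1) s := fun t ht =>
    hs.lineMap_mem hx hy ht
  have hcont : ContinuousOn (fun t : ℝ =>
      f (AffineMap.lineMap x y t) - AffineMap.lineMap (f x) (f y) t) (Icc 0 1) :=
    (hf.comp AffineMap.lineMap_continuous.continuousOn hmaps).sub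
      AffineMap.lineMap_continuous.continuousOn
  have hnonneg := nonneg_of_continuousOn_of_midpoint_le hcont (fun t ht u hu => ?_)
    (by simp) (by simp) b ⟨hb, by linarith⟩
  · rw [AffineMap.lineMap_apply_module, AffineMap.lineMap_apply_module, ← hab,
      add_sub_cancel_right] at hnonneg
    exact sub_nonneg.1 hnonneg
  · have hle := hmid _ (hmaps ht) _ (hmaps hu)
    rw [AffineMap.map_midpoint, AffineMap.map_midpoint, midpoint_eq_smul_add (R := ℝ)
      (AffineMap.lineMap (f x) (f y) t), smul_eq_mul, invOf_eq_inv]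
    linarith

theorem concaveOn_iff_antitoneOn_of_hasDerivWithinAt {s : Set ℝ} {f f' : ℝ → ℝ}
    (hs : Convex ℝ s) (hf : ∀ x ∈ s, HasDerivWithinAt f (f' x) s x) :
    ConcaveOn ℝ s f ↔ AntitoneOn f' s := by
  constructor
  · intro hconc x hx y hy hxy
    rcases hxy.eq_or_lt with rfl | hlt
    · exact le_rfl
    · exact (hconc.le_slope_of_hasDerivWithinAt hx hy hlt (hf y hy)).trans
        (hconc.slope_le_of_hasDerivWithinAt hx hy hlt (hf x hx))
  · intro hanti
    have hderiv : ∀ x ∈ interior s, HasDerivAt f (f' x) x := fun x hx =>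
      (hf x (interior_subset hx)).hasDerivAt (mem_interior_iff_mem_nhds.1 hx)
    have hanti' : AntitoneOn (deriv f) (interior s) :=
      (hanti.mono interior_subset).congr fun x hx => (hderiv x hx).deriv.symm
    exact hanti'.concaveOn_of_deriv hs (fun x hx => (hf x hx).continuousWithinAt)
      (fun x hx => (hderiv x hx).differentiableAt.differentiableWithinAt)

theorem continuousOn_invFunOn_image {α β : Type*} [LinearOrder α] [TopologicalSpace α]
    [OrderTopology α] [Nonempty α] [LinearOrder β] [TopologicalSpace β] [OrderClosedTopology β]
    {s : Set α} {f : α → β} (hs : s.OrdConnected) (hf : StrictMonoOn f s) :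
    ContinuousOn (invFunOn f s) (f '' s) := by
  have hsymm : Continuous (hf.orderIso f s).symm :=
    OrderTopology.continuous_iff.2 fun a => by
      simpa only [OrderIso.preimage_Ioi, OrderIso.preimage_Iio] using ⟨isOpen_Ioi, isOpen_Iio⟩
  refine continuousOn_iff_continuous_domRestrict.2 ((continuous_subtype_val.comp hsymm).congr ?_)
  intro y
  obtain ⟨x, rfl⟩ := (hf.orderIso f s).surjective y
  rw [comp_apply, OrderIso.symm_apply_apply]
  exact (hf.injOn.leftInvOn_invFunOn x.2).symm

theorem hasDerivWithinAt_invFunOn_image {𝕜 : Type*} [NontriviallyNormedField 𝕜] {s : Set 𝕜}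
    {f : 𝕜 → 𝕜} {f' x : 𝕜} (hinj : InjOn f s) (hx : x ∈ s)
    (hcont : ContinuousWithinAt (invFunOn f s) (f '' s) (f x))
    (hf : HasDerivWithinAt f f' s x) (hf' : f' ≠ 0) :
    HasDerivWithinAt (invFunOn f s) f'⁻¹ (f '' s) (f x) := by
  have hleft : invFunOn f s (f x) = x := hinj.leftInvOn_invFunOn hx
  have hmaps : MapsTo (invFunOn f s) (f '' s) s := (surjOn_image f s).mapsTo_invFunOn
  refine HasFDerivWithinAt.of_local_left_inverse (t := s) (f := f)
    (f' := ContinuousLinearEquiv.unitsEquivAut 𝕜 (Units.mk0 f' hf'))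
    (hcont.tendsto_nhdsWithin hmaps) ?_ (mem_image_of_mem f hx)
    (eventually_mem_nhdsWithin.mono fun y hy => (surjOn_image f s).rightInvOn_invFunOn hy)
  rw [hleft]
  exact hf

lemma invFunOn_comp_apply_of_injective {α β γ : Type*} [Nonempty α] {e : β → γ}
    (he : Injective e) (f : α → β) (s : Set α) (b : β) :
    invFunOn (e ∘ f) s (e b) = invFunOn f s b := by
  -- Both sides choose from the same predicate on `α`, also when it has no witness.
  unfold invFunOn
  congr! <;> simp only [comp_apply, he.eq_iff]

lemma convex_image_of_isPreconnected {X : Type*} [TopologicalSpace X] {s : Set X} {f : X → ℝ}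
    (hs : IsPreconnected s) (hf : ContinuousOn f s) : Convex ℝ (f '' s) :=
  (hs.image f hf).ordConnected.convex

lemma sum_div_mem_image_of_isPreconnected {X : Type*} [TopologicalSpace X] {s : Set X} {f : X → ℝ}
    (hs : IsPreconnected s) (hf : ContinuousOn f s) {n : ℕ} (hn : 1 ≤ n) {a : Fin n → X}
    (ha : ∀ i, a i ∈ s) : (∑ i, f (a i)) / n ∈ f '' s := by
  have hmem := (convex_image_of_isPreconnected hs hf).sum_mem (t := Finset.univ)
    (w := fun _ : Fin n => (n : ℝ)⁻¹) (z := fun i => f (a i)) (fun _ _ => by positivity)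
    (by simp [Nat.one_le_iff_ne_zero.1 hn]) (fun i _ => mem_image_of_mem f (ha i))
  rwa [← Finset.smul_sum, smul_eq_mul, inv_mul_eq_div] at hmem

section Mean

variable {I : Set ℝ} {f g : ℝ → ℝ} {n : ℕ} {a : Fin n → ℝ}

lemma qam_mem (hI : I.OrdConnected) (hf : ContinuousOn f I) (hn : 1 ≤ n) (ha : ∀ i, a i ∈ I) :
    qam I f a ∈ I :=
  invFunOn_mem (sum_div_mem_image_of_isPreconnected hI.isPreconnected hf hn ha)

lemma apply_qam (hI : I.OrdConnected) (hf : ContinuousOn f I) (hn : 1 ≤ n) (ha : ∀ i, a i ∈ I) :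
    f (qam I f a) = (∑ i, f (a i)) / n :=
  invFunOn_eq (sum_div_mem_image_of_isPreconnected hI.isPreconnected hf hn ha)

lemma qam_le_iff_of_strictMonoOn (hI : I.OrdConnected) (hf : ContinuousOn f I)
    (hmono : StrictMonoOn f I) (hn : 1 ≤ n) (ha : ∀ i, a i ∈ I) {t : ℝ} (ht : t ∈ I) :
    qam I f a ≤ t ↔ (∑ i, f (a i)) / n ≤ f t := by
  rw [← apply_qam hI hf hn ha, hmono.le_iff_le (qam_mem hI hf hn ha) ht]

lemma qam_neg (I : Set ℝ) (f : ℝ → ℝ) (a : Fin n → ℝ) : qam I (-f) a = qam I f a := by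
  simp only [qam, Pi.neg_apply, Finset.sum_neg_distrib, neg_div]
  exact invFunOn_comp_apply_of_injective neg_injective f I _

lemma qamLE_neg_neg : qamLE I (-f) (-g) ↔ qamLE I f g := by
  simp only [qamLE, qam_neg]

theorem qamLE_iff_concaveOn (hI : I.OrdConnected) (hf : ContinuousOn f I) (hg : ContinuousOn g I)
    (hfmono : StrictMonoOn f I) (hgmono : StrictMonoOn g I) :
    qamLE I f g ↔ ConcaveOn ℝ (g '' I) (f ∘ invFunOn g I) := by
  have hleft : LeftInvOn (invFunOn g I) g I := hgmono.injOn.leftInvOn_invFunOn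
  constructor
  · intro hle
    refine concaveOn_of_continuousOn_of_midpoint_le
      (convex_image_of_isPreconnected hI.isPreconnected hg)
      (hf.comp (continuousOn_invFunOn_image hI hgmono) (surjOn_image g I).mapsTo_invFunOn) ?_
    rintro _ ⟨u, hu, rfl⟩ _ ⟨v, hv, rfl⟩
    have huv : ∀ i, ![u, v] i ∈ I := Fin.forall_fin_two.2 ⟨hu, hv⟩
    have hmean := (qam_le_iff_of_strictMonoOn hI hf hfmono one_le_two huv
      (qam_mem hI hg one_le_two huv)).1 (hle 2 one_le_two _ huv)
    rw [comp_apply, comp_apply, hleft hu, hleft hv, midpoint_eq_smul_add, smul_eq_mul,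
      invOf_eq_inv, inv_mul_eq_div]
    simpa [qam] using hmean
  · intro hconc n hn a ha
    rw [qam_le_iff_of_strictMonoOn hI hf hfmono hn ha (qam_mem hI hg hn ha)]
    have hjensen := hconc.le_map_sum (t := Finset.univ) (w := fun _ : Fin n => (n : ℝ)⁻¹)
      (p := fun i => g (a i)) (fun _ _ => by positivity)
      (by simp [Nat.one_le_iff_ne_zero.1 hn]) (fun i _ => mem_image_of_mem g (ha i))
    rw [← Finset.smul_sum, ← Finset.smul_sum, smul_eq_mul, smul_eq_mul, inv_mul_eq_div,
      inv_mul_eq_div] at hjensen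
    simp only [comp_apply, hleft (ha _)] at hjensen
    exact hjensen

end Mean

section Derivative

variable {I : Set ℝ} {f g f' g' : ℝ → ℝ}

lemma hasDerivWithinAt_comp_invFunOn_image (hI : I.OrdConnected) (hgmono : StrictMonoOn g I)
    {x f'x g'x : ℝ} (hx : x ∈ I) (hf : HasDerivWithinAt f f'x I x)
    (hg : HasDerivWithinAt g g'x I x) (hg' : g'x ≠ 0) :
    HasDerivWithinAt (f ∘ invFunOn g I) (f'x / g'x) (g '' I) (g x) := by
  have hleft : invFunOn g I (g x) = x := hgmono.injOn.leftInvOn_invFunOn hx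
  have hinv := hasDerivWithinAt_invFunOn_image hgmono.injOn hx
    (continuousOn_invFunOn_image hI hgmono _ (mem_image_of_mem g hx)) hg hg'
  rw [← hleft] at hf
  exact hf.comp (g x) hinv (surjOn_image g I).mapsTo_invFunOn

theorem qamLE_iff_antitoneOn_div_of_strictMonoOn (hI : I.OrdConnected)
    (hf : ∀ x ∈ I, HasDerivWithinAt f (f' x) I x) (hg : ∀ x ∈ I, HasDerivWithinAt g (g' x) I x)
    (hg' : ∀ x ∈ I, g' x ≠ 0) (hfmono : StrictMonoOn f I) (hgmono : StrictMonoOn g I) :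
    qamLE I f g ↔ AntitoneOn (fun x => f' x / g' x) I := by
  have hfc : ContinuousOn f I := fun x hx => (hf x hx).continuousWithinAt
  have hgc : ContinuousOn g I := fun x hx => (hg x hx).continuousWithinAt
  have hleft : LeftInvOn (invFunOn g I) g I := hgmono.injOn.leftInvOn_invFunOn
  have hderiv : ∀ y ∈ g '' I, HasDerivWithinAt (f ∘ invFunOn g I)
      (f' (invFunOn g I y) / g' (invFunOn g I y)) (g '' I) y := by
    rintro _ ⟨x, hx, rfl⟩
    rw [hleft hx]
    exact hasDerivWithinAt_comp_invFunOn_image hI hgmono hx (hf x hx) (hg x hx) (hg' x hx)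
  rw [qamLE_iff_concaveOn hI hfc hgc hfmono hgmono, concaveOn_iff_antitoneOn_of_hasDerivWithinAt
    (convex_image_of_isPreconnected hI.isPreconnected hgc) hderiv]
  simp only [AntitoneOn, forall_mem_image]
  refine forall₂_congr fun x hx => forall₂_congr fun y hy => ?_
  rw [hgmono.le_iff_le hx hy, hleft hx, hleft hy]

theorem qam_le_iff_deriv_ratio_antitone_same_monotonicity_general (hI : I.OrdConnected)
    (hf : ∀ x ∈ I, HasDerivWithinAt f (f' x) I x) (hg : ∀ x ∈ I, HasDerivWithinAt g (g' x) I x)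
    (hg' : ∀ x ∈ I, g' x ≠ 0)
    (hsame : (StrictMonoOn f I ∧ StrictMonoOn g I) ∨ (StrictAntiOn f I ∧ StrictAntiOn g I)) :
    qamLE I f g ↔ AntitoneOn (fun x => f' x / g' x) I := by
  rcases hsame with ⟨hfmono, hgmono⟩ | ⟨hfanti, hganti⟩
  · exact qamLE_iff_antitoneOn_div_of_strictMonoOn hI hf hg hg' hfmono hgmono
  · have hneg := qamLE_iff_antitoneOn_div_of_strictMonoOn hI (fun x hx => (hf x hx).neg)
      (fun x hx => (hg x hx).neg) (fun x hx => neg_ne_zero.2 (hg' x hx)) hfanti.neg hganti.neg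
    simpa only [neg_div_neg_eq, qamLE_neg_neg] using hneg

end Derivative

/-- for differentiable `f, g` with nonvanishing derivatives and of the
same monotonicity, `A^[f] ≤ A^[g]` iff `f'/g'` is non-increasing on `I`. -/
theorem qam_le_iff_deriv_ratio_antitone_same_monotonicity
    (I : Set ℝ) (hI : I.OrdConnected) (hInontriv : ∃ x ∈ I, ∃ y ∈ I, x < y)
    (f g f' g' : ℝ → ℝ)
    (hfd : ∀ x ∈ I, HasDerivWithinAt f (f' x) I x)
    (hgd : ∀ x ∈ I, HasDerivWithinAt g (g' x) I x)
    (hf'0 : ∀ x ∈ I, f' x ≠ 0) (hg'0 : ∀ x ∈ I, g' x ≠ 0)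
    (hsame : (StrictMonoOn f I ∧ StrictMonoOn g I) ∨
             (StrictAntiOn f I ∧ StrictAntiOn g I)) :
    qamLE I f g ↔ AntitoneOn (fun x => f' x / g' x) I :=
  qam_le_iff_deriv_ratio_antitone_same_monotonicity_general hI hfd hgd hg'0 hsame
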